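/- arXiv:1012.4257 — 3 statements merged into one kernel-verified Lean document; each statement's English description precedes it below -/
import Mathlib

section
/- For every integer n ≥ 1, the set {(x₁,x₂) ∈ ℂ² : h_{2n}(x₁,x₂) = 0 and h_n(x₁², x₂²) = 1} is finite and has exactly 4n² elements. -/
/-- The complete homogeneous symmetric function `h_r(y₁,y₂) = ∑_{i=0}^r y₁^i y₂^{r−i}`. -/
def hc {R : Type*} [CommRing R] (r : ℕ) (y₁ y₂ : R) : R :=
  ∑ i ∈ Finset.range (r + 1), y₁ ^ i * y₂ ^ (r - i)

/-!
A solution with `x₂ = 0` would need `x₁ ^ (2 * n) = 0` and `x₁ ^ (2 * n) = 1`, so every solution is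
`(z * y, y)` with `y ≠ 0`. By homogeneity the first equation says that `z` is a root of unity of
order dividing `2 * n + 1` other than `1`. For such `z` we have `(z ^ 2) ^ (n + 1) = z`, so the
geometric sum `hc n (z ^ 2) 1` collapses to `(z - 1) / (z ^ 2 - 1) = 1 / (z + 1)`, and the second
equation becomes `y ^ (2 * n) = z + 1`. Here `z + 1 ≠ 0` because `2 * n + 1` is odd, hence each of
the `2 * n` ratios `z` admits `2 * n` values of `y`.
-/

open Polynomial

section CommRing

variable {R : Type*} [CommRing R]

theorem hc_mul_sub (r : ℕ) (x y : R) : hc r x y * (x - y) = x ^ (r + 1) - y ^ (r + 1) := by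
  simpa only [hc, Nat.add_sub_cancel] using geom_sum₂_mul x y (r + 1)

theorem hc_self (r : ℕ) (x : R) : hc r x x = (r + 1 : ℕ) * x ^ r := by
  simpa only [hc, Nat.add_sub_cancel] using geom_sum₂_self x (r + 1)

theorem hc_zero_right (r : ℕ) (x : R) : hc r x 0 = x ^ r := by
  rw [hc, Finset.sum_range_succ, Nat.sub_self, pow_zero, mul_one, add_eq_right]
  refine Finset.sum_eq_zero fun i hi => ?_
  rw [zero_pow (Nat.sub_ne_zero_of_lt (Finset.mem_range.1 hi)), mul_zero]

theorem ne_zero_of_hc_eq_zero_of_hc_sq_eq_one [Nontrivial R] {n : ℕ} {x y : R}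
    (h₀ : hc (2 * n) x y = 0) (h₁ : hc n (x ^ 2) (y ^ 2) = 1) : y ≠ 0 := by
  rintro rfl
  rw [zero_pow two_ne_zero, hc_zero_right, ← pow_mul] at h₁
  rw [hc_zero_right, h₁] at h₀
  exact one_ne_zero h₀

theorem hc_mul_mul (r : ℕ) (c x y : R) : hc r (c * x) (c * y) = c ^ r * hc r x y := by
  simp only [hc, Finset.mul_sum]
  refine Finset.sum_congr rfl fun i hi => ?_
  rw [← pow_mul_pow_sub c (Finset.mem_range_succ_iff.1 hi)]
  ring

theorem hc_mul_right (r : ℕ) (z y : R) : hc r (z * y) y = y ^ r * hc r z 1 := by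
  rw [← hc_mul_mul, mul_one, mul_comm]

theorem add_one_ne_zero_of_odd_of_pow_eq_one [NeZero (2 : R)] {m : ℕ} (hm : Odd m) {z : R}
    (hz : z ^ m = 1) : z + 1 ≠ 0 := by
  intro h
  rw [eq_neg_of_add_eq_zero_left h, hm.neg_one_pow] at hz
  exact two_ne_zero (α := R) (by linear_combination -hz)

end CommRing

section IsDomain

variable {R : Type*} [CommRing R] [IsDomain R]

theorem hc_one_right_eq_zero_iff {r : ℕ} (hr : ((r + 1 : ℕ) : R) ≠ 0) {z : R} :
    hc r z 1 = 0 ↔ z ^ (r + 1) = 1 ∧ z ≠ 1 := by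
  rcases eq_or_ne z 1 with rfl | hz
  · simpa [hc_self] using hr
  · rw [← mul_eq_zero_iff_right (sub_ne_zero.2 hz), hc_mul_sub, one_pow, sub_eq_zero,
      and_iff_left hz]

theorem hc_sq_one_mul_add_one {n : ℕ} {z : R} (hz : z ^ (2 * n + 1) = 1) (hz_ne : z ≠ 1) :
    hc n (z ^ 2) 1 * (z + 1) = 1 := by
  have sq_pow : (z ^ 2) ^ (n + 1) = z := by
    rw [← pow_mul, show 2 * (n + 1) = 2 * n + 1 + 1 by ring, pow_succ, hz, one_mul]
  apply mul_right_cancel₀ (sub_ne_zero.2 hz_ne)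
  calc
    hc n (z ^ 2) 1 * (z + 1) * (z - 1) = hc n (z ^ 2) 1 * (z ^ 2 - 1) := by ring
    _ = 1 * (z - 1) := by rw [hc_mul_sub, sq_pow, one_pow, one_mul]

theorem hc_eq_zero_and_hc_sq_eq_one_iff [NeZero (2 : R)] {n : ℕ}
    (h_odd : ((2 * n + 1 : ℕ) : R) ≠ 0) {y : R} (hy : y ≠ 0) (z : R) :
    hc (2 * n) (z * y) y = 0 ∧ hc n ((z * y) ^ 2) (y ^ 2) = 1 ↔
      (z ^ (2 * n + 1) = 1 ∧ z ≠ 1) ∧ y ^ (2 * n) = z + 1 := by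
  rw [hc_mul_right, mul_eq_zero_iff_left (pow_ne_zero _ hy), hc_one_right_eq_zero_iff h_odd,
    mul_pow, hc_mul_right, ← pow_mul]
  refine and_congr_right fun ⟨hz, hz_ne⟩ => ?_
  have hz_add : z + 1 ≠ 0 := add_one_ne_zero_of_odd_of_pow_eq_one (odd_two_mul_add_one n) hz
  rw [← mul_left_inj' hz_add, mul_assoc, hc_sq_one_mul_add_one hz hz_ne, mul_one, one_mul]

open Classical in
/-- The pairs `(z, y)` such that `z` is a root of unity of order dividing `2 * n + 1` other than `1`
and `y ^ (2 * n) = z + 1`. They parametrize the solutions of `hc (2 * n) x₁ x₂ = 0` and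
`hc n (x₁ ^ 2) (x₂ ^ 2) = 1` through `x₁ = z * y`, `x₂ = y`. -/
noncomputable def solutionParams (R : Type*) [CommRing R] [IsDomain R] (n : ℕ) :
    Finset (Σ _ : R, R) :=
  ((nthRootsFinset (2 * n + 1) (1 : R)).erase 1).sigma fun z => nthRootsFinset (2 * n) (z + 1)

theorem mem_solutionParams {n : ℕ} (hn : n ≠ 0) {q : Σ _ : R, R} :
    q ∈ solutionParams R n ↔
      (q.1 ^ (2 * n + 1) = 1 ∧ q.1 ≠ 1) ∧ q.2 ^ (2 * n) = q.1 + 1 := by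
  simp [solutionParams, Nat.pos_of_ne_zero hn, and_comm (a := q.1 ≠ 1)]

theorem snd_ne_zero_of_mem_solutionParams [NeZero (2 : R)] {n : ℕ} {q : Σ _ : R, R}
    (hq : q ∈ solutionParams R n) : q.2 ≠ 0 := by
  classical
  obtain ⟨hz, hy⟩ := Finset.mem_sigma.1 hq
  have hz_pow := (mem_nthRootsFinset (2 * n).succ_pos 1).1 (Finset.mem_of_mem_erase hz)
  exact ne_zero_of_mem_nthRootsFinset
    (add_one_ne_zero_of_odd_of_pow_eq_one (odd_two_mul_add_one n) hz_pow) hy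

end IsDomain

section Field

variable {K : Type*} [Field K]

theorem bijOn_solutionParams [NeZero (2 : K)] {n : ℕ} (hn : n ≠ 0)
    (h_odd : ((2 * n + 1 : ℕ) : K) ≠ 0) :
    Set.BijOn (fun q : Σ _ : K, K => (q.1 * q.2, q.2)) (solutionParams K n)
      {p : K × K | hc (2 * n) p.1 p.2 = 0 ∧ hc n (p.1 ^ 2) (p.2 ^ 2) = 1} := by
  refine ⟨fun q hq => ?mapsTo, ?injOn, ?surjOn⟩
  case mapsTo =>
    exact (hc_eq_zero_and_hc_sq_eq_one_iff h_odd (snd_ne_zero_of_mem_solutionParams hq) q.1).2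
      ((mem_solutionParams hn).1 hq)
  case injOn =>
    rintro ⟨z, y⟩ hq ⟨z', y'⟩ - h
    obtain ⟨hzy, rfl : y = y'⟩ := Prod.mk.inj h
    obtain rfl : z = z' := mul_right_cancel₀ (snd_ne_zero_of_mem_solutionParams hq) hzy
    rfl
  case surjOn =>
    rintro ⟨x, y⟩ h
    have hy : y ≠ 0 := ne_zero_of_hc_eq_zero_of_hc_sq_eq_one h.1 h.2
    have hxy : x / y * y = x := div_mul_cancel₀ x hy
    refine ⟨⟨x / y, y⟩, (mem_solutionParams hn).2 ?_, Prod.ext hxy rfl⟩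
    rw [← hc_eq_zero_and_hc_sq_eq_one_iff h_odd hy, hxy]
    exact h

variable [IsSepClosed K]

theorem card_nthRootsFinset_of_isSepClosed {m : ℕ} (hm : (m : K) ≠ 0) {a : K} (ha : a ≠ 0) :
    (nthRootsFinset m a).card = m := by
  classical
  have separable : (X ^ m - C a).Separable := separable_X_pow_sub_C a hm ha
  rw [nthRootsFinset_def, nthRoots, Multiset.toFinset_card_of_nodup (nodup_roots separable),
    ← (IsSepClosed.splits_of_separable _ separable).natDegree_eq_card_roots,
    natDegree_X_pow_sub_C]

theorem card_solutionParams {n : ℕ} (h_even : ((2 * n : ℕ) : K) ≠ 0)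
    (h_odd : ((2 * n + 1 : ℕ) : K) ≠ 0) : (solutionParams K n).card = 4 * n ^ 2 := by
  classical
  have : NeZero (2 : K) := ⟨fun h => h_even (by simp [h])⟩
  have card_fiber : ∀ z ∈ (nthRootsFinset (2 * n + 1) (1 : K)).erase 1,
      (nthRootsFinset (2 * n) (z + 1)).card = 2 * n := fun z hz =>
    card_nthRootsFinset_of_isSepClosed h_even <|
      add_one_ne_zero_of_odd_of_pow_eq_one (odd_two_mul_add_one n)
        ((mem_nthRootsFinset (2 * n).succ_pos 1).1 (Finset.mem_of_mem_erase hz))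
  have card_ratios : ((nthRootsFinset (2 * n + 1) (1 : K)).erase 1).card = 2 * n := by
    rw [Finset.card_erase_of_mem (one_mem_nthRootsFinset (2 * n).succ_pos),
      card_nthRootsFinset_of_isSepClosed h_odd one_ne_zero, Nat.add_sub_cancel]
  calc
    (solutionParams K n).card
      = ∑ z ∈ (nthRootsFinset (2 * n + 1) (1 : K)).erase 1,
          (nthRootsFinset (2 * n) (z + 1)).card := by
        simp only [solutionParams, Finset.card_sigma]
    _ = 2 * n * (2 * n) := by
        rw [Finset.sum_congr rfl card_fiber, Finset.sum_const, card_ratios, smul_eq_mul]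
    _ = 4 * n ^ 2 := by ring

theorem stmt_7_general {n : ℕ} (h_even : ((2 * n : ℕ) : K) ≠ 0)
    (h_odd : ((2 * n + 1 : ℕ) : K) ≠ 0) :
    {p : K × K | hc (2 * n) p.1 p.2 = 0 ∧ hc n (p.1 ^ 2) (p.2 ^ 2) = 1}.Finite ∧
    {p : K × K | hc (2 * n) p.1 p.2 = 0 ∧ hc n (p.1 ^ 2) (p.2 ^ 2) = 1}.ncard = 4 * n ^ 2 := by
  have : NeZero (2 : K) := ⟨fun h => h_even (by simp [h])⟩
  have hn : n ≠ 0 := by rintro rfl; simp at h_even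
  have bijOn := bijOn_solutionParams hn h_odd
  refine ⟨bijOn.finite_iff_finite.1 (solutionParams K n).finite_toSet, ?_⟩
  rw [← bijOn.ncard_eq, Set.ncard_coe_finset, card_solutionParams h_even h_odd]

end Field

/-- For `n ≥ 1`, the set `{(x₁,x₂) ∈ ℂ² : h_{2n}(x₁,x₂) = 0, h_n(x₁²,x₂²) = 1}` is finite
with exactly `4n²` elements. -/
theorem stmt_7 (n : ℕ) (hn : 1 ≤ n) :
    {p : ℂ × ℂ | hc (2 * n) p.1 p.2 = 0 ∧ hc n (p.1 ^ 2) (p.2 ^ 2) = 1}.Finite ∧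
    {p : ℂ × ℂ | hc (2 * n) p.1 p.2 = 0 ∧ hc n (p.1 ^ 2) (p.2 ^ 2) = 1}.ncard = 4 * n ^ 2 :=
  stmt_7_general (Nat.cast_ne_zero.2 (by omega)) (Nat.cast_ne_zero.2 (by omega))
end

section
/- Let n ≥ 2. In the polynomial ring ℤ[a₁,…,a_{2n−1}], the determinant d_{2n+1} lies in the ideal generated by the elements d₃, d₄, …, d_{2n} together with b_n. -/
/-- The sequence `a₀ = 1, a₁, …, a_d` (and `0` otherwise) in `ℤ[a₁,…,a_d]`. -/
noncomputable def aseq (d : ℕ) (k : ℤ) : MvPolynomial (Fin d) ℤ :=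
  if h : 1 ≤ k ∧ k ≤ d then MvPolynomial.X ⟨(k - 1).toNat, by omega⟩
  else if k = 0 then 1 else 0

/-- `d_r := det((a_{1+j−i})_{1≤i,j≤r})` in `ℤ[a₁,…,a_d]`, with `d₀ = 1`. -/
noncomputable def dr (d r : ℕ) : MvPolynomial (Fin d) ℤ :=
  Matrix.det (Matrix.of fun i j : Fin r => aseq d (1 + ((j : ℕ) : ℤ) - ((i : ℕ) : ℤ)))

/-- `b_r := a_r² + 2∑_{i≥1} (−1)^i a_{r+i} a_{r−i}` in `ℤ[a₁,…,a_d]` (the sum is finite: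
all terms with `i > 2d` vanish). -/
noncomputable def bpoly (d r : ℕ) : MvPolynomial (Fin d) ℤ :=
  aseq d r ^ 2 +
    2 * ∑ i ∈ Finset.Icc 1 (2 * d),
      (-1 : MvPolynomial (Fin d) ℤ) ^ i * (aseq d ((r : ℤ) + i) * aseq d ((r : ℤ) - i))

/-!
With `A = ∑ aₖ Xᵏ`, the coefficients of `A⁻¹` are `(-1)ʳ dᵣ`. The product `P = A(X) A(-X)` is even,
has constant term `1`, and its coefficient of `X²ⁿ` is `(-1)ⁿ bₙ`. Comparing the coefficients of
`X²ⁿ⁺¹` in `P * A⁻¹ = A(-X)` expresses `d₂ₙ₊₁ - a₂ₙ₊₁` through the terms `P₂ᵢ d₂ₙ₊₁₋₂ᵢ` with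
`1 ≤ i ≤ n`: the last one is a multiple of `bₙ`, all others involve `d₃, d₅, …, d₂ₙ₋₁`.
-/

open Finset Matrix PowerSeries

section CommRing

variable {R : Type*} [CommRing R]

/-- The Toeplitz–Hessenberg determinant `d_r` of a sequence `a`: ones on the subdiagonal when
`a 0 = 1`, and zeros below it when `a` vanishes at negative indices. -/
def toeplitzHessenbergDet (a : ℤ → R) (r : ℕ) : R :=
  (of fun i j : Fin r => a (1 + ((j : ℕ) : ℤ) - ((i : ℕ) : ℤ))).det

/-- The element `b_n` of a sequence `a`. Stopping the sum at `i = n` loses nothing for sequences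
that vanish at negative indices. -/
def alternatingSquare (a : ℤ → R) (n : ℕ) : R :=
  a n ^ 2 + 2 * ∑ i ∈ Icc 1 n, (-1) ^ i * (a ((n : ℤ) + i) * a ((n : ℤ) - i))

/-- The generating function `∑ aₖ Xᵏ` of the nonnegatively indexed part of `a`. -/
def genSeries (a : ℤ → R) : R⟦X⟧ :=
  PowerSeries.mk fun k => a k

/-- The `r × r` Toeplitz matrix of a sequence `a`, upper triangular when `a` vanishes at negative
indices; it represents multiplication by `genSeries a` modulo `X ^ r`. -/
def toeplitz (a : ℤ → R) (r : ℕ) : Matrix (Fin r) (Fin r) R :=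
  of fun i j => a (((j : ℕ) : ℤ) - ((i : ℕ) : ℤ))

@[simp]
lemma coeff_genSeries (a : ℤ → R) (k : ℕ) : coeff k (genSeries a) = a k :=
  coeff_mk _ _

lemma constantCoeff_genSeries (a : ℤ → R) : constantCoeff (genSeries a) = a 0 := by
  rw [← coeff_zero_eq_constantCoeff_apply, coeff_genSeries, Nat.cast_zero]

lemma det_toeplitz {a : ℤ → R} (a_neg : ∀ k < 0, a k = 0) (r : ℕ) :
    (toeplitz a r).det = a 0 ^ r := by
  have upperTriangular : (toeplitz a r).IsUpperTriangular := fun i j (hji : j < i) =>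
    a_neg _ (by omega)
  rw [det_of_isUpperTriangular upperTriangular]
  simp [toeplitz]

lemma coeff_vecMul_toeplitz {a : ℤ → R} (a_neg : ∀ k < 0, a k = 0) (g : R⟦X⟧) (r : ℕ) :
    (fun i : Fin r => coeff i g) ᵥ* toeplitz a r =
      fun j : Fin r => coeff j (g * genSeries a) := by
  funext j
  calc ((fun i : Fin r => coeff i g) ᵥ* toeplitz a r) j
      = ∑ i ∈ range r, coeff i g * a ((j : ℕ) - (i : ℤ)) := by
        rw [Finset.sum_range]; rfl
    _ = ∑ i ∈ range (j + 1), coeff i g * a ((j : ℕ) - (i : ℤ)) := by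
        refine (sum_subset (range_subset_range.2 j.isLt) fun i _ hi => ?_).symm
        rw [a_neg _ (by rw [mem_range] at hi; omega), mul_zero]
    _ = coeff j (g * genSeries a) := by
        rw [coeff_mul, Nat.sum_antidiagonal_eq_sum_range_succ_mk]
        refine sum_congr rfl fun i hi => ?_
        rw [coeff_genSeries, Nat.cast_sub (Nat.lt_succ_iff.1 (mem_range.1 hi))]

lemma adjugate_toeplitz_zero_last (a : ℤ → R) (r : ℕ) :
    (toeplitz a (r + 1)).adjugate 0 (Fin.last r) = (-1) ^ r * toeplitzHessenbergDet a r := by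
  rw [adjugate_fin_succ_eq_det_submatrix, Fin.val_last, Fin.val_zero, add_zero,
    toeplitzHessenbergDet]
  congr 2
  ext i j
  simp [toeplitz, add_comm]

theorem pow_mul_coeff_eq_toeplitzHessenbergDet {a : ℤ → R} (a_neg : ∀ k < 0, a k = 0) {g : R⟦X⟧}
    (hg : g * genSeries a = 1) (r : ℕ) :
    a 0 ^ (r + 1) * coeff r g = (-1) ^ r * toeplitzHessenbergDet a r := by
  let T := toeplitz a (r + 1)
  let v : Fin (r + 1) → R := fun i => coeff i g
  have vecMul_eq_single : v ᵥ* T = Pi.single 0 1 := by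
    funext j
    rw [coeff_vecMul_toeplitz a_neg, hg]
    simp [coeff_one, Pi.single_apply]
  have det_smul_eq_row : T.det • v = T.adjugate.row 0 := by
    rw [← single_one_vecMul, ← vecMul_eq_single, vecMul_vecMul, mul_adjugate, vecMul_smul,
      vecMul_one]
  calc a 0 ^ (r + 1) * coeff r g = (T.det • v) (Fin.last r) := by simp [T, v, det_toeplitz a_neg]
    _ = (-1) ^ r * toeplitzHessenbergDet a r := by
      rw [det_smul_eq_row, row_apply, adjugate_toeplitz_zero_last]

lemma coeff_mul_rescale_neg_one (f : R⟦X⟧) (k : ℕ) :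
    coeff k (f * rescale (-1) f) =
      ∑ p ∈ antidiagonal k, (-1) ^ p.2 * (coeff p.1 f * coeff p.2 f) := by
  simp only [coeff_mul, coeff_rescale, mul_left_comm]

lemma coeff_mul_rescale_neg_one_of_odd (f : R⟦X⟧) {k : ℕ} (hk : Odd k) :
    coeff k (f * rescale (-1) f) = 0 := by
  rw [coeff_mul_rescale_neg_one]
  have odd_add {p : ℕ × ℕ} (hp : p ∈ antidiagonal k) : Odd (p.1 + p.2) :=
    HasAntidiagonal.mem_antidiagonal.1 hp ▸ hk
  refine sum_involution (fun p _ => p.swap) (fun p hp => ?_) (fun p hp _ hswap => ?_)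
    (fun p hp => HasAntidiagonal.swap_mem_antidiagonal.2 hp) fun p _ => p.swap_swap
  · have signs_cancel : (-1 : R) ^ p.2 + (-1) ^ p.1 = 0 := by
      rcases Nat.even_or_odd p.2 with even | odd
      · simp [even.neg_one_pow, (Nat.odd_add.1 (odd_add hp) |>.2 even).neg_one_pow]
      · simp [odd.neg_one_pow, (Nat.odd_add'.1 (odd_add hp) |>.1 odd).neg_one_pow]
    rw [Prod.fst_swap, Prod.snd_swap]
    linear_combination coeff p.1 f * coeff p.2 f * signs_cancel
  · have components_eq : p.2 = p.1 := congrArg Prod.fst hswap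
    have odd := odd_add hp
    grind

lemma sum_antidiagonal_two_mul {M : Type*} [AddCommMonoid M] (f : ℕ × ℕ → M) (n : ℕ) :
    ∑ p ∈ antidiagonal (2 * n), f p =
      f (n, n) + ∑ i ∈ Icc 1 n, (f (n + i, n - i) + f (n - i, n + i)) := by
  induction n generalizing f with
  | zero => simp
  | succ n ih =>
    have shift : ∑ i ∈ Icc 1 n, (f (n + i + 1, n - i + 1) + f (n - i + 1, n + i + 1)) =
        ∑ i ∈ Icc 1 n, (f (n + 1 + i, n + 1 - i) + f (n + 1 - i, n + 1 + i)) :=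
      sum_congr rfl fun i hi => by
        rw [Nat.sub_add_comm (mem_Icc.1 hi).2, Nat.add_right_comm]
    rw [Nat.mul_succ, Nat.sum_antidiagonal_succ, Nat.sum_antidiagonal_succ',
      ih fun p => f (p.1 + 1, p.2 + 1), shift, sum_Icc_succ_top (Nat.le_add_left 1 n), Nat.sub_self,
      show n + 1 + (n + 1) = 2 * n + 1 + 1 by omega]
    abel

lemma coeff_two_mul_genSeries_mul_rescale_neg_one (a : ℤ → R) (n : ℕ) :
    coeff (2 * n) (genSeries a * rescale (-1) (genSeries a)) =
      (-1) ^ n * alternatingSquare a n := by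
  simp only [coeff_mul_rescale_neg_one, sum_antidiagonal_two_mul, coeff_genSeries,
    alternatingSquare, mul_add, mul_sum]
  congr 1
  · rw [sq]
  · refine sum_congr rfl fun i hi => ?_
    have hin : i ≤ n := (mem_Icc.1 hi).2
    have sign : (-1 : R) ^ (n - i) = (-1) ^ (n + i) :=
      neg_one_pow_congr (by grind)
    rw [Nat.cast_sub hin, Nat.cast_add, sign]
    ring

theorem toeplitzHessenbergDet_sub_eq_sum {a : ℤ → R} (a_zero : a 0 = 1)
    (a_neg : ∀ k < 0, a k = 0) (n : ℕ) :
    toeplitzHessenbergDet a (2 * n + 1) - a (2 * n + 1) =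
      ∑ p ∈ antidiagonal (2 * n), coeff (p.1 + 1) (genSeries a * rescale (-1) (genSeries a)) *
        ((-1) ^ p.2 * toeplitzHessenbergDet a p.2) := by
  obtain ⟨g, hg⟩ : ∃ g, g * genSeries a = 1 := by
    refine IsUnit.exists_left_inv (isUnit_iff_constantCoeff.2 ?_)
    rw [constantCoeff_genSeries, a_zero]
    exact isUnit_one
  have coeff_g (r : ℕ) : coeff r g = (-1) ^ r * toeplitzHessenbergDet a r := by
    simpa [a_zero] using pow_mul_coeff_eq_toeplitzHessenbergDet a_neg hg r
  let P := genSeries a * rescale (-1) (genSeries a)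
  have P_zero : coeff 0 P = 1 := by simp [P, coeff_mul_rescale_neg_one, a_zero]
  have P_mul_g : P * g = rescale (-1) (genSeries a) := by
    linear_combination rescale (-1) (genSeries a) * hg
  have coeff_P_mul_g := congrArg (coeff (2 * n + 1)) P_mul_g
  simp only [coeff_mul, Nat.sum_antidiagonal_succ, P_zero, coeff_g, coeff_rescale,
    coeff_genSeries, (odd_two_mul_add_one n).neg_one_pow] at coeff_P_mul_g
  push_cast at coeff_P_mul_g
  linear_combination -coeff_P_mul_g

theorem stmt_11_general {a : ℤ → R} (a_zero : a 0 = 1) (a_neg : ∀ k < 0, a k = 0) (n : ℕ) :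
    toeplitzHessenbergDet a (2 * n + 1) - a (2 * n + 1) ∈
      Ideal.span (insert (alternatingSquare a n)
        (toeplitzHessenbergDet a '' Set.Icc 3 (2 * n))) := by
  rw [toeplitzHessenbergDet_sub_eq_sum a_zero a_neg]
  refine Ideal.sum_mem _ fun p hp => ?_
  rw [HasAntidiagonal.mem_antidiagonal] at hp
  rcases Nat.even_or_odd (p.1 + 1) with even | odd
  · obtain top | mem_Icc : p.1 + 1 = 2 * n ∨ p.2 ∈ Set.Icc 3 (2 * n) := by
      rw [Set.mem_Icc]
      grind
    · rw [top, coeff_two_mul_genSeries_mul_rescale_neg_one]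
      exact Ideal.mul_mem_right _ _
        (Ideal.mul_mem_left _ _ (Ideal.subset_span (Set.mem_insert _ _)))
    · exact Ideal.mul_mem_left _ _ (Ideal.mul_mem_left _ _
        (Ideal.subset_span (Set.mem_insert_of_mem _ ⟨p.2, mem_Icc, rfl⟩)))
  · rw [coeff_mul_rescale_neg_one_of_odd _ odd, zero_mul]
    exact Ideal.zero_mem _

end CommRing

lemma aseq_zero (d : ℕ) : aseq d 0 = 1 := by
  simp [aseq]

lemma aseq_of_neg (d : ℕ) {k : ℤ} (hk : k < 0) : aseq d k = 0 := by
  rw [aseq, dif_neg (by omega), if_neg (by omega)]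

lemma aseq_of_lt {d : ℕ} {k : ℤ} (hk : d < k) : aseq d k = 0 := by
  rw [aseq, dif_neg (by omega), if_neg (by omega)]

lemma bpoly_eq_alternatingSquare {d n : ℕ} (hn : n ≤ 2 * d) :
    bpoly d n = alternatingSquare (aseq d) n := by
  rw [bpoly, alternatingSquare]
  congr 2
  refine (sum_subset (Icc_subset_Icc_right hn) fun i _ hi => ?_).symm
  rw [aseq_of_neg d (k := n - i) (by grind), mul_zero, mul_zero]

/-- For `n ≥ 2`, in `ℤ[a₁,…,a_{2n−1}]` the determinant `d_{2n+1}` lies in the ideal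
generated by `d₃, …, d_{2n}` and `b_n`. -/
theorem stmt_11 (n : ℕ) (hn : 2 ≤ n) :
    dr (2 * n - 1) (2 * n + 1) ∈
      Ideal.span
        (insert (bpoly (2 * n - 1) n) ((fun r => dr (2 * n - 1) r) '' Set.Icc 3 (2 * n))) := by
  have sub_mem := stmt_11_general (aseq_zero (2 * n - 1)) (fun _ => aseq_of_neg _) n
  rwa [aseq_of_lt (by omega), sub_zero, ← bpoly_eq_alternatingSquare (by omega)] at sub_mem
end

section
/- Let n ≥ 2. The quotient ring ℤ[a₁,a₂]/(δ'_{2n−1}, δ_{2n}) is a free ℤ-module of rank 2n(n−1). -/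
/-- The sequence `a₀ = 1, a₁, a₂` (and `0` otherwise) of coefficients in `ℤ[a₁,a₂]`. -/
noncomputable def aseq2 (k : ℤ) : MvPolynomial (Fin 2) ℤ :=
  if k = 0 then 1
  else if k = 1 then MvPolynomial.X 0
  else if k = 2 then MvPolynomial.X 1
  else 0

/-- `δ_r := det((a_{1+j−i})_{1≤i,j≤r})`, with `δ₀ = 1`. -/
noncomputable def delta (r : ℕ) : MvPolynomial (Fin 2) ℤ :=
  Matrix.det (Matrix.of fun i j : Fin r => aseq2 (1 + ((j : ℕ) : ℤ) - ((i : ℕ) : ℤ)))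

/-!
Write `A = ℤ[a₁, a₂]` and `x = a₂`. Dividing every odd-indexed `δ_r` by `a₁` turns the recurrence
`δ_{r+2} = a₁ δ_{r+1} - x δ_r` into `e_{r+2} = c_r e_{r+1} - x e_r`, with `c_r = a₁²` for even `r`
and `c_r = 1` for odd `r`, so `(e_{r+1}, e_{r+2}) = (e_{r+1}, x e_r)`. As `x` is regular modulo
`e_{r+1}`, multiplication by `x` gives a short exact sequence
`0 → A/(e_{r+1}, e_r) → A/(e_{r+1}, x e_r) → A/(e_{r+1}, x) → 0`.
Modulo `x`, `e_r` becomes `a₁ ^ (2⌊r/2⌋)`, so the right-hand term is free of rank `2⌊(r+1)/2⌋`,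
and the ranks add up along the recurrence, starting from `A/(e_0, e_1) = 0`.
-/

open scoped Polynomial Pointwise

section IsFreeOfRank

variable {R M N P : Type*} [CommRing R] [AddCommGroup M] [AddCommGroup N] [AddCommGroup P]
  [Module R M] [Module R N] [Module R P] {m n : ℕ}

variable (R M n) in
/-- `M` is a free `R`-module of rank `n`, in the sense that it has a basis with `n` elements. Over
a nontrivial ring this says that `M` is free and finite with `finrank R M = n`. -/
def IsFreeOfRank : Prop :=
  Nonempty (Module.Basis (Fin n) R M)

namespace IsFreeOfRank

theorem free (h : IsFreeOfRank R M n) : Module.Free R M :=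
  h.elim fun b => .of_basis b

theorem finrank_eq [Nontrivial R] (h : IsFreeOfRank R M n) : Module.finrank R M = n :=
  h.elim fun b => by rw [Module.finrank_eq_card_basis b, Fintype.card_fin]

theorem of_subsingleton [Subsingleton M] : IsFreeOfRank R M 0 :=
  ⟨.empty M⟩

theorem of_equiv (h : IsFreeOfRank R M n) (e : M ≃ₗ[R] N) : IsFreeOfRank R N n :=
  h.map fun b => b.map e

theorem of_exact (hM : IsFreeOfRank R M m) (hP : IsFreeOfRank R P n) {f : M →ₗ[R] N}
    {g : N →ₗ[R] P} (hf : Function.Injective f) (hg : Function.Surjective g)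
    (hfg : Function.Exact f g) : IsFreeOfRank R N (m + n) := by
  obtain ⟨bM⟩ := hM
  obtain ⟨bP⟩ := hP
  have := Module.Projective.of_basis bP
  obtain ⟨s, hs⟩ := Module.projective_lifting_property g LinearMap.id hg
  obtain ⟨e, -⟩ := hfg.splitSurjectiveEquiv hf ⟨s, hs⟩
  exact ⟨((bM.prod bP).map e.symm).reindex finSumFinEquiv⟩

end IsFreeOfRank

end IsFreeOfRank

section Quotient

variable {R A : Type*} [CommRing R] [CommRing A] [Algebra R A] {f x y : A} {m n : ℕ}

theorem isFreeOfRank_quotient_span_mul (hx : x ∈ nonZeroDivisors A)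
    (hAy : IsFreeOfRank R (A ⧸ Ideal.span {y}) m) (hAx : IsFreeOfRank R (A ⧸ Ideal.span {x}) n) :
    IsFreeOfRank R (A ⧸ Ideal.span {x * y}) (m + n) := by
  have hxy : x • Ideal.span {y} = Ideal.span {x * y} := by
    rw [Ideal.span, Submodule.smul_span, Set.smul_set_singleton, smul_eq_mul]
  rw [← hxy]
  exact hAy.of_exact hAx
    (f := (Ideal.mulQuot x (Ideal.span {y})).restrictScalars R)
    (g := (Ideal.quotOfMul x (Ideal.span {y})).restrictScalars R)
    (Ideal.mulQuot_injective _ hx) (Ideal.quotOfMul_surjective _) (Ideal.exact_mulQuot_quotOfMul _)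

theorem isFreeOfRank_quotient_quotient_iff :
    IsFreeOfRank R ((A ⧸ Ideal.span {f}) ⧸ Ideal.span {Ideal.Quotient.mk (Ideal.span {f}) y}) n ↔
      IsFreeOfRank R (A ⧸ Ideal.span {f, y}) n := by
  have e := (DoubleQuot.quotQuotEquivQuotSupₐ R (Ideal.span {f}) (Ideal.span {y})).toLinearEquiv
  rw [Ideal.map_span, Set.image_singleton, ← Ideal.span_insert] at e
  exact ⟨fun h => h.of_equiv e, fun h => h.of_equiv e.symm⟩

theorem isFreeOfRank_quotient_span_pair_mul
    (hx : Ideal.Quotient.mk (Ideal.span {f}) x ∈ nonZeroDivisors (A ⧸ Ideal.span {f}))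
    (hy : IsFreeOfRank R (A ⧸ Ideal.span {f, y}) m)
    (hfx : IsFreeOfRank R (A ⧸ Ideal.span {f, x}) n) :
    IsFreeOfRank R (A ⧸ Ideal.span {f, x * y}) (m + n) := by
  rw [← isFreeOfRank_quotient_quotient_iff] at hy hfx ⊢
  rw [map_mul]
  exact isFreeOfRank_quotient_span_mul hx hy hfx

section MonicModulo

variable {π : A →ₐ[R] R[X]}

theorem isFreeOfRank_quotient_span_pair_of_monic (hπ : Function.Surjective π)
    (hker : RingHom.ker π = Ideal.span {x}) (hf : (π f).Monic) :
    IsFreeOfRank R (A ⧸ Ideal.span {f, x}) (π f).natDegree := by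
  let φ : A →ₐ[R] AdjoinRoot (π f) := (AdjoinRoot.mkₐ (π f)).comp π
  have hφ : Function.Surjective φ := AdjoinRoot.mk_surjective.comp hπ
  have hφker : RingHom.ker φ = Ideal.span {f, x} := by
    rw [Ideal.span_insert, ← hker, ← Ideal.comap_map_of_surjective' π hπ, Ideal.map_span,
      Set.image_singleton]
    ext a
    simp [φ, AdjoinRoot.mk_eq_zero, Ideal.mem_span_singleton]
  rw [← hφker]
  exact IsFreeOfRank.of_equiv ⟨AdjoinRoot.powerBasisAux' hf⟩
    (Ideal.quotientKerAlgEquivOfSurjective hφ).symm.toLinearEquiv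

theorem mk_mem_nonZeroDivisors_of_monic (hx : x ∈ nonZeroDivisors A)
    (hker : RingHom.ker π = Ideal.span {x}) (hf : (π f).Monic) :
    Ideal.Quotient.mk (Ideal.span {f}) x ∈ nonZeroDivisors (A ⧸ Ideal.span {f}) := by
  rw [mem_nonZeroDivisors_iff_right]
  intro u hu
  obtain ⟨u, rfl⟩ := Ideal.Quotient.mk_surjective u
  rw [← map_mul, Ideal.Quotient.eq_zero_iff_dvd] at hu
  obtain ⟨v, hv⟩ := hu
  have hπx : π x = 0 := by
    rw [← RingHom.mem_ker, hker]
    exact Ideal.mem_span_singleton_self x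
  have hπv : π v = 0 := by
    have := congrArg π hv
    rw [map_mul, map_mul, hπx, mul_zero] at this
    exact hf.mul_right_eq_zero_iff.1 this.symm
  rw [← RingHom.mem_ker, hker, Ideal.mem_span_singleton] at hπv
  obtain ⟨w, rfl⟩ := hπv
  rw [Ideal.Quotient.eq_zero_iff_dvd]
  exact ⟨w, mul_cancel_right_mem_nonZeroDivisors hx |>.1 (by linear_combination hv)⟩

theorem isFreeOfRank_quotient_span_pair_of_recurrence (hx : x ∈ nonZeroDivisors A)
    (hπ : Function.Surjective π) (hker : RingHom.ker π = Ideal.span {x}) {c e : ℕ → A}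
    (he_zero : e 0 = 1) (he : ∀ r, e (r + 2) = c r * e (r + 1) - x * e r)
    (hmonic : ∀ r, (π (e r)).Monic) (r : ℕ) :
    IsFreeOfRank R (A ⧸ Ideal.span {e r, e (r + 1)})
      (∑ i ∈ Finset.range (r + 1), (π (e i)).natDegree) := by
  induction r with
  | zero =>
    have htop : Ideal.span {e 0, e 1} = ⊤ :=
      Ideal.eq_top_of_isUnit_mem _ (Ideal.subset_span (Set.mem_insert _ _)) (he_zero ▸ isUnit_one)
    have : Subsingleton (A ⧸ Ideal.span {e 0, e 1}) := Ideal.Quotient.subsingleton_iff.2 htop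
    simpa [he_zero] using IsFreeOfRank.of_subsingleton (R := R) (M := A ⧸ Ideal.span {e 0, e 1})
  | succ r ih =>
    have hspan : Ideal.span {e (r + 1), e (r + 2)} = Ideal.span {e (r + 1), x * e r} := by
      rw [he, sub_eq_neg_add, Ideal.span_pair_add_mul_left, Ideal.span_pair_neg]
    rw [hspan, Finset.sum_range_succ]
    rw [Set.pair_comm] at ih
    exact isFreeOfRank_quotient_span_pair_mul
      (mk_mem_nonZeroDivisors_of_monic hx hker (hmonic _)) ih
      (isFreeOfRank_quotient_span_pair_of_monic hπ hker (hmonic _))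

end MonicModulo

end Quotient

section SetX1Zero

variable (R : Type*) [CommRing R]

/-- The reduction `R[a₁, a₂] → R[T]` modulo `a₂`, sending `a₁` to `T` and `a₂` to `0`. -/
noncomputable def evalX1Zero : MvPolynomial (Fin 2) R →ₐ[R] R[X] :=
  MvPolynomial.aeval ![Polynomial.X, 0]

@[simp]
theorem evalX1Zero_X_zero : evalX1Zero R (MvPolynomial.X 0) = Polynomial.X := by
  simp [evalX1Zero]

@[simp]
theorem evalX1Zero_X_one : evalX1Zero R (MvPolynomial.X 1) = 0 := by
  simp [evalX1Zero]

theorem evalX1Zero_surjective : Function.Surjective (evalX1Zero R) := fun p =>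
  ⟨Polynomial.aeval (MvPolynomial.X 0) p, by
    rw [← Polynomial.aeval_algHom_apply, evalX1Zero_X_zero, Polynomial.aeval_X_left_apply]⟩

theorem ker_evalX1Zero : RingHom.ker (evalX1Zero R) = Ideal.span {MvPolynomial.X 1} := by
  apply le_antisymm
  · let I : Ideal (MvPolynomial (Fin 2) R) := Ideal.span {MvPolynomial.X 1}
    let incl : R[X] →ₐ[R] MvPolynomial (Fin 2) R := Polynomial.aeval (MvPolynomial.X 0)
    have hmk : ((Ideal.Quotient.mkₐ R I).comp incl).comp (evalX1Zero R) =
        Ideal.Quotient.mkₐ R I := by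
      ext i
      fin_cases i
      · simp [incl]
      · simp [I]
    intro p hp
    rw [RingHom.mem_ker] at hp
    rw [← Ideal.Quotient.eq_zero_iff_mem]
    simpa [hp] using (DFunLike.congr_fun hmk p).symm
  · rw [Ideal.span_singleton_le_iff_mem, RingHom.mem_ker, evalX1Zero_X_one]

end SetX1Zero

theorem det_eq_sub_of_row_zero_of_col_zero {R : Type*} [CommRing R] {r : ℕ}
    (M : Matrix (Fin (r + 2)) (Fin (r + 2)) R) (hcol : ∀ i : Fin r, M i.succ.succ 0 = 0)
    (hrow : ∀ j : Fin r, M 0 j.succ.succ = 0) :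
    M.det = M 0 0 * (M.submatrix Fin.succ Fin.succ).det -
      M 0 1 * M 1 0 * (M.submatrix (Fin.succ ∘ Fin.succ) (Fin.succ ∘ Fin.succ)).det := by
  have hminor : (M.submatrix (Fin.succAbove 1) Fin.succ).det =
      M 0 1 * (M.submatrix (Fin.succ ∘ Fin.succ) (Fin.succ ∘ Fin.succ)).det := by
    have hsucc : Fin.succAbove (1 : Fin (r + 2)) ∘ Fin.succ = Fin.succ ∘ Fin.succ :=
      funext fun i => Fin.succ_succAbove_succ 0 i
    rw [Matrix.det_succ_row_zero, Fin.sum_univ_succ]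
    simp [hrow, hsucc]
  rw [Matrix.det_succ_column_zero, Fin.sum_univ_succ, Fin.sum_univ_succ]
  simp only [Fin.val_zero, pow_zero, one_mul, Fin.succAbove_zero, Fin.succ_zero_eq_one, Fin.val_one,
    pow_one, neg_mul, hminor, hcol, mul_zero, zero_mul, Finset.sum_const_zero, add_zero]
  ring

section Delta

open MvPolynomial (X)

theorem aseq2_of_neg {k : ℤ} (hk : k < 0) : aseq2 k = 0 := by
  rw [aseq2, if_neg (by omega), if_neg (by omega), if_neg (by omega)]

theorem aseq2_of_two_lt {k : ℤ} (hk : 2 < k) : aseq2 k = 0 := by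
  rw [aseq2, if_neg (by omega), if_neg (by omega), if_neg (by omega)]

theorem delta_zero : delta 0 = 1 := by
  simp [delta]

theorem delta_one : delta 1 = X 0 := by
  simp [delta, aseq2]

theorem delta_add_two (r : ℕ) : delta (r + 2) = X 0 * delta (r + 1) - X 1 * delta r := by
  have hshift (k : ℕ) (ι : Fin k → Fin (r + 2)) (d : ℤ) (hι : ∀ i, ((ι i : ℕ) : ℤ) = i + d) :
      ((Matrix.of fun i j : Fin (r + 2) => aseq2 (1 + ((j : ℕ) : ℤ) - ((i : ℕ) : ℤ))).submatrix
        ι ι).det = delta k := by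
    congr 1
    ext i j : 1
    simp only [Matrix.submatrix_apply, Matrix.of_apply, hι]
    congr 1
    ring
  rw [delta, det_eq_sub_of_row_zero_of_col_zero, hshift (r + 1) Fin.succ 1, hshift r _ 2]
  · simp [aseq2]
  · intro i
    simp only [Function.comp_apply, Fin.val_succ]
    push_cast
    ring
  · simp
  · intro i
    rw [Matrix.of_apply, Fin.val_succ, Fin.val_succ, Fin.val_zero]
    exact aseq2_of_neg (by omega)
  · intro j
    rw [Matrix.of_apply, Fin.val_succ, Fin.val_succ, Fin.val_zero]
    exact aseq2_of_two_lt (by omega)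

/-- The sequence `e_r` with `e_{2k} = δ_{2k}` and `e_{2k+1} = δ'_{2k+1} = δ_{2k+1} / a₁`, given by
its recurrence; see `X_pow_mul_reducedDelta`. -/
noncomputable def reducedDelta : ℕ → MvPolynomial (Fin 2) ℤ
  | 0 => 1
  | 1 => 1
  | r + 2 => (if Even r then X 0 ^ 2 else 1) * reducedDelta (r + 1) - X 1 * reducedDelta r

theorem X_pow_mul_reducedDelta (r : ℕ) : X 0 ^ (r % 2) * reducedDelta r = delta r := by
  induction r using Nat.twoStepInduction with
  | zero => simp [reducedDelta, delta_zero]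
  | one => simp [reducedDelta, delta_one]
  | more r ih ih' =>
    rw [delta_add_two, ← ih, ← ih', reducedDelta]
    rcases Nat.even_or_odd r with hr | hr
    · rw [if_pos hr, Nat.even_iff.1 hr, Nat.odd_iff.1 hr.add_one, Nat.even_iff.1 (hr.add even_two)]
      ring
    · rw [if_neg (Nat.not_even_iff_odd.2 hr), Nat.odd_iff.1 hr, Nat.even_iff.1 hr.add_one,
        Nat.odd_iff.1 (hr.add_even even_two)]
      ring

theorem evalX1Zero_reducedDelta (r : ℕ) :
    evalX1Zero ℤ (reducedDelta r) = Polynomial.X ^ (2 * (r / 2)) := by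
  induction r using Nat.twoStepInduction with
  | zero => simp [reducedDelta]
  | one => simp [reducedDelta]
  | more r _ ih =>
    rw [reducedDelta, map_sub, map_mul, map_mul, ih, evalX1Zero_X_one, zero_mul, sub_zero]
    split_ifs with hr
    · rw [map_pow, evalX1Zero_X_zero, ← pow_add]
      congr 1
      grind
    · rw [map_one, one_mul]
      congr 1
      grind

theorem isFreeOfRank_quotient_reducedDelta (r : ℕ) :
    IsFreeOfRank ℤ (MvPolynomial (Fin 2) ℤ ⧸ Ideal.span {reducedDelta r, reducedDelta (r + 1)})
      (∑ i ∈ Finset.range (r + 1), 2 * (i / 2)) := by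
  have h := isFreeOfRank_quotient_span_pair_of_recurrence
    (mem_nonZeroDivisors_of_ne_zero (MvPolynomial.X_ne_zero 1)) (evalX1Zero_surjective ℤ)
    (ker_evalX1Zero ℤ) (e := reducedDelta) (by rw [reducedDelta]) (fun r => by rw [reducedDelta])
    (fun r => evalX1Zero_reducedDelta r ▸ Polynomial.monic_X_pow _) r
  simpa only [evalX1Zero_reducedDelta, Polynomial.natDegree_X_pow] using h

end Delta

theorem sum_range_two_mul_div_two (k : ℕ) :
    ∑ i ∈ Finset.range (2 * k + 2), 2 * (i / 2) = 2 * (k + 1) * k := by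
  induction k with
  | zero => simp [Finset.sum_range_succ]
  | succ k ih =>
    rw [show 2 * (k + 1) + 2 = 2 * k + 2 + 1 + 1 by ring, Finset.sum_range_succ,
      Finset.sum_range_succ, ih, show (2 * k + 2 + 1) / 2 = k + 1 by omega,
      show (2 * k + 2) / 2 = k + 1 by omega]
    ring

/-- For `n ≥ 2`, the quotient `ℤ[a₁,a₂]/(δ'_{2n−1}, δ_{2n})`, where `δ'_{2n−1} = δ_{2n−1}/a₁`,
is a free `ℤ`-module of rank `2n(n−1)`. -/
theorem stmt_17 (n : ℕ) (hn : 2 ≤ n) (δ' : MvPolynomial (Fin 2) ℤ)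
    (hδ' : MvPolynomial.X 0 * δ' = delta (2 * n - 1)) :
    Module.Free ℤ (MvPolynomial (Fin 2) ℤ ⧸ Ideal.span {δ', delta (2 * n)}) ∧
    Module.finrank ℤ (MvPolynomial (Fin 2) ℤ ⧸ Ideal.span {δ', delta (2 * n)})
      = 2 * n * (n - 1) := by
  obtain ⟨k, rfl⟩ : ∃ k, n = k + 1 := ⟨n - 1, by omega⟩
  have hodd : MvPolynomial.X 0 * reducedDelta (2 * k + 1) = delta (2 * k + 1) := by
    simpa [Nat.add_mod] using X_pow_mul_reducedDelta (2 * k + 1)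
  have heven : reducedDelta (2 * k + 2) = delta (2 * k + 2) := by
    simpa using X_pow_mul_reducedDelta (2 * k + 2)
  obtain rfl : δ' = reducedDelta (2 * k + 1) :=
    mul_left_cancel₀ (MvPolynomial.X_ne_zero 0) (hδ'.trans hodd.symm)
  have h := isFreeOfRank_quotient_reducedDelta (2 * k + 1)
  rw [heven, sum_range_two_mul_div_two] at h
  exact ⟨h.free, h.finrank_eq⟩
end
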